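/- Let X be a finite set and let F ⊆ P(X) be a saturated k-Sperner system with a homogeneous atom H, and let (A_i)_{i=0}^{k-1} be its canonical decomposition. Then A_i is a saturated antichain for every 0 ≤ i ≤ k−1. -/

import Mathlib

open Finset

/-- A family contains a chain of `m` sets `C 0 ⊊ C 1 ⊊ ⋯ ⊊ C (m-1)`. -/
def HasChainOfLen {α : Type*} [DecidableEq α] (F : Finset (Finset α)) (m : ℕ) : Prop :=
  ∃ C : Fin m → Finset α, StrictMono C ∧ ∀ i, C i ∈ F

/-- `F ⊆ P(X)` is a saturated `k`-Sperner system: it has no chain of `k+1` sets,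
and adding any `S ⊆ X` with `S ∉ F` creates a chain of `k+1` sets. -/
def IsSatKSperner {α : Type*} [DecidableEq α] (X : Finset α) (F : Finset (Finset α))
    (k : ℕ) : Prop :=
  (∀ A ∈ F, A ⊆ X) ∧ ¬ HasChainOfLen F (k + 1) ∧
    ∀ S ⊆ X, S ∉ F → HasChainOfLen (insert S F) (k + 1)

/-- `H` is a homogeneous atom for `F` in `P(X)`: `H ⊆ X` is maximal with the property
that every member of `F` contains all of `H` or none of it, and `|H| ≥ 2`. -/
def IsHomogAtom {α : Type*} [DecidableEq α] (X : Finset α) (F : Finset (Finset α))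
    (H : Finset α) : Prop :=
  H ⊆ X ∧ (∀ S ∈ F, S ∩ H = ∅ ∨ S ∩ H = H) ∧
    (∀ B ⊆ X, (∀ S ∈ F, S ∩ B = ∅ ∨ S ∩ B = B) → H ⊆ B → H = B) ∧
    2 ≤ H.card

/-- The small members of `F` (those disjoint from the homogeneous atom `H`). -/
def smallSets {α : Type*} [DecidableEq α] (F : Finset (Finset α)) (H : Finset α) :
    Finset (Finset α) :=
  F.filter fun S => S ∩ H = ∅

/-- The large members of `F` (those containing the homogeneous atom `H`). -/
def largeSets {α : Type*} [DecidableEq α] (F : Finset (Finset α)) (H : Finset α) :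
    Finset (Finset α) :=
  F.filter fun S => H ⊆ S

/-- The minimal elements (under inclusion) of a family of sets. -/
def minimalsIn {α : Type*} [DecidableEq α] (G : Finset (Finset α)) : Finset (Finset α) :=
  G.filter fun A => ∀ B ∈ G, B ⊆ A → B = A

/-- What remains of `F` after stripping off minimal elements `i` times. -/
def canonRest {α : Type*} [DecidableEq α] (F : Finset (Finset α)) : ℕ → Finset (Finset α)
  | 0 => F
  | i + 1 => canonRest F i \ minimalsIn (canonRest F i)

/-- The canonical decomposition of `F` into antichains:
`canonDecomp F i` is the family of minimal elements of `F \ ⋃_{j<i} canonDecomp F j`. -/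
def canonDecomp {α : Type*} [DecidableEq α] (F : Finset (Finset α)) (i : ℕ) :
    Finset (Finset α) :=
  minimalsIn (canonRest F i)

/-- A sequence `(D i)_{i=0}^t` of families is layered if for `1 ≤ i ≤ t`,
every member of `D i` strictly contains some member of `D (i-1)`. -/
def Layered {α : Type*} [DecidableEq α] (D : ℕ → Finset (Finset α)) (t : ℕ) : Prop :=
  ∀ i, 1 ≤ i → i ≤ t → ∀ A ∈ D i, ∃ B ∈ D (i - 1), B ⊂ A

/-! Deleting `S` from a chain of `k + 1` sets in `insert S F` leaves a chain `C` of `k` sets in `F`,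
all comparable with `S`. Since `F` has no longer chain, `C i` lies in `canonDecomp F i`. Hence every
`S ∉ F` is comparable with a member of each antichain. A member `S` of `F` reduces to this case:
take distinct elements `x`, `y` of the homogeneous atom and toggle `x` in `S`. The result separates
`x` from `y`, so it is not in `F`, and each member of `F` comparable with it is comparable
with `S`. -/

section

variable {α : Type*} {X S A B : Finset α} {F G : Finset (Finset α)} {x y : α} {i k n : ℕ}

theorem exists_notMem_forall_comparable_imp (hF : ∀ T ∈ F, x ∈ T ↔ y ∈ T) (hxy : x ≠ y)
    (hx : x ∈ X) (hSF : S ∈ F) (hSX : S ⊆ X) :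
    ∃ S' ⊆ X, S' ∉ F ∧ ∀ A ∈ F, A ⊆ S' ∨ S' ⊆ A → A ⊆ S ∨ S ⊆ A := by
  classical
  by_cases hxS : x ∈ S
  · have hyS : y ∈ S.erase x := mem_erase.2 ⟨hxy.symm, (hF S hSF).1 hxS⟩
    refine ⟨S.erase x, (erase_subset x S).trans hSX, fun h => ?_, fun A hA => Or.imp ?_ ?_⟩
    · exact notMem_erase x S ((hF _ h).2 hyS)
    · exact (·.trans (erase_subset x S))
    · intro h
      have hxA : x ∈ A := (hF A hA).2 (h hyS)
      rwa [← insert_eq_self.2 hxA, subset_insert_iff]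
  · have hyS : y ∉ insert x S := by
      simp only [mem_insert, hxy.symm, false_or, ← hF S hSF, hxS, not_false_iff]
    refine ⟨insert x S, insert_subset hx hSX, fun h => ?_, fun A hA => Or.imp ?_ ?_⟩
    · exact hyS ((hF _ h).1 (mem_insert_self x S))
    · intro h
      have hxA : x ∉ A := fun hxA => hyS (h ((hF A hA).1 hxA))
      exact (subset_insert_iff_of_notMem hxA).1 h
    · exact (subset_insert x S).trans

variable [DecidableEq α]

theorem not_ssubset_of_mem_minimalsIn (hA : A ∈ minimalsIn G) (hB : B ∈ minimalsIn G) :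
    ¬ A ⊂ B := fun hAB =>
  hAB.ne ((mem_filter.1 hB).2 A (mem_filter.1 hA).1 hAB.subset)

theorem mem_canonRest_succ :
    A ∈ canonRest F (i + 1) ↔ A ∈ canonRest F i ∧ ∃ B ∈ canonRest F i, B ⊂ A := by
  simp only [canonRest, minimalsIn, mem_sdiff, mem_filter, not_and, not_forall]
  refine and_congr_right fun hA => ?_
  simp only [hA, forall_const, exists_prop, ssubset_iff_subset_ne]

theorem canonRest_subset (F : Finset (Finset α)) : ∀ i, canonRest F i ⊆ F
  | 0 => Subset.rfl
  | i + 1 => sdiff_subset.trans (canonRest_subset F i)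

theorem canonDecomp_subset (F : Finset (Finset α)) (i : ℕ) : canonDecomp F i ⊆ F :=
  (filter_subset _ _).trans (canonRest_subset F i)

theorem mem_canonDecomp_iff :
    A ∈ canonDecomp F i ↔ A ∈ canonRest F i ∧ A ∉ canonRest F (i + 1) := by
  have hdiff : canonRest F i \ canonRest F (i + 1) = canonDecomp F i :=
    Finset.sdiff_sdiff_eq_self (filter_subset _ _)
  rw [← hdiff, mem_sdiff]

theorem mem_canonRest_succ_of_ssubset (hA : A ∈ canonRest F i) (hB : B ∈ F) (hAB : A ⊂ B) :
    B ∈ canonRest F (i + 1) := by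
  induction i with
  | zero => exact mem_canonRest_succ.2 ⟨hB, A, hA, hAB⟩
  | succ i ih => exact mem_canonRest_succ.2 ⟨ih (mem_canonRest_succ.1 hA).1, A, hA, hAB⟩

theorem mem_canonRest_of_strictMono {C : Fin n → Finset α} (hC : StrictMono C)
    (hCF : ∀ j, C j ∈ F) {a b : Fin n} (hab : a ≤ b) {m : ℕ} (ha : C a ∈ canonRest F (a + m)) :
    C b ∈ canonRest F (b + m) := by
  obtain ⟨b, hb⟩ := b
  replace hab : (a : ℕ) ≤ b := hab
  induction b, hab using Nat.le_induction with
  | base => exact ha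
  | succ b _ ih =>
    rw [add_right_comm]
    exact mem_canonRest_succ_of_ssubset (ih (by omega)) (hCF _) (hC (Fin.mk_lt_mk.2 b.lt_succ_self))

theorem hasChainOfLen_add_of_mem_canonRest {C : Fin (n + 1) → Finset α} (hC : StrictMono C)
    (hCF : ∀ j, C j ∈ F) (h0 : C 0 ∈ canonRest F i) : HasChainOfLen F (n + 1 + i) := by
  induction i generalizing n with
  | zero => exact ⟨C, hC, hCF⟩
  | succ i ih =>
    obtain ⟨-, B, hB, hB0⟩ := mem_canonRest_succ.1 h0
    have hBF : ∀ j, Matrix.vecCons B C j ∈ F := Fin.cases (canonRest_subset F i hB) hCF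
    rw [← add_assoc, add_right_comm]
    exact ih (hC.vecCons hB0) hBF hB

theorem canonRest_eq_empty (hF : ¬ HasChainOfLen F (k + 1)) : canonRest F k = ∅ := by
  refine eq_empty_of_forall_notMem fun A hA => hF ?_
  have hC : StrictMono ![A] := Subsingleton.strictMono _
  rw [add_comm]
  exact hasChainOfLen_add_of_mem_canonRest hC (fun _ => by simpa using canonRest_subset F k hA) hA

theorem mem_canonDecomp_of_strictMono (hF : ¬ HasChainOfLen F (k + 1)) {C : Fin k → Finset α}
    (hC : StrictMono C) (hCF : ∀ j, C j ∈ F) (i : Fin k) : C i ∈ canonDecomp F i := by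
  obtain _ | k := k
  · exact i.elim0
  refine mem_canonDecomp_iff.2
    ⟨mem_canonRest_of_strictMono hC hCF (Fin.zero_le i) (m := 0) (hCF 0), fun hi => ?_⟩
  have hlast : C (Fin.last k) ∈ canonRest F (k + 1) :=
    mem_canonRest_of_strictMono hC hCF (Fin.le_last i) hi
  exact notMem_empty _ (canonRest_eq_empty hF ▸ hlast)

theorem exists_strictMono_comparable_of_hasChainOfLen_insert (hF : ¬ HasChainOfLen F (k + 1))
    (hS : HasChainOfLen (insert S F) (k + 1)) :
    ∃ C : Fin k → Finset α, StrictMono C ∧ (∀ j, C j ∈ F) ∧ ∀ j, C j ⊆ S ∨ S ⊆ C j := by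
  obtain ⟨C, hC, hCS⟩ := hS
  obtain ⟨d, rfl⟩ : ∃ d, C d = S := by
    by_contra! hne
    exact hF ⟨C, hC, fun j => mem_of_mem_insert_of_ne (hCS j) (hne j)⟩
  refine ⟨C ∘ d.succAbove, hC.comp (Fin.strictMono_succAbove d), fun j => ?_, fun j => ?_⟩
  · exact mem_of_mem_insert_of_ne (hCS _) (hC.injective.ne (Fin.succAbove_ne d j))
  · exact (le_total (d.succAbove j) d).imp (hC.monotone ·) (hC.monotone ·)

theorem IsSatKSperner.exists_mem_canonDecomp_of_notMem (hF : IsSatKSperner X F k) (hi : i < k)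
    (hSX : S ⊆ X) (hSF : S ∉ F) : ∃ A ∈ canonDecomp F i, A ⊆ S ∨ S ⊆ A := by
  obtain ⟨-, hchain, hsat⟩ := hF
  obtain ⟨C, hC, hCF, hCS⟩ :=
    exists_strictMono_comparable_of_hasChainOfLen_insert hchain (hsat S hSX hSF)
  exact ⟨C ⟨i, hi⟩, mem_canonDecomp_of_strictMono hchain hC hCF ⟨i, hi⟩, hCS _⟩

theorem IsSatKSperner.exists_mem_canonDecomp (hF : IsSatKSperner X F k)
    (hxyF : ∀ T ∈ F, x ∈ T ↔ y ∈ T) (hxy : x ≠ y) (hx : x ∈ X) (hi : i < k) (hSX : S ⊆ X) :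
    ∃ A ∈ canonDecomp F i, A ⊆ S ∨ S ⊆ A := by
  by_cases hSF : S ∈ F
  · obtain ⟨S', hS'X, hS'F, himp⟩ := exists_notMem_forall_comparable_imp hxyF hxy hx hSF hSX
    obtain ⟨A, hA, hAS'⟩ := hF.exists_mem_canonDecomp_of_notMem hi hS'X hS'F
    exact ⟨A, hA, himp A (canonDecomp_subset F i hA) hAS'⟩
  · exact hF.exists_mem_canonDecomp_of_notMem hi hSX hSF

theorem IsHomogAtom.exists_ne_forall_mem_iff {H : Finset α} (hH : IsHomogAtom X F H) :
    ∃ x ∈ X, ∃ y, x ≠ y ∧ ∀ T ∈ F, x ∈ T ↔ y ∈ T := by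
  obtain ⟨hHX, hinter, -, hcard⟩ := hH
  obtain ⟨x, hx, y, hy, hxy⟩ := one_lt_card.1 hcard
  refine ⟨x, hHX hx, y, hxy, fun T hT => ?_⟩
  rcases hinter T hT with hdisj | hsub
  · rw [← disjoint_iff_inter_eq_empty] at hdisj
    exact iff_of_false (disjoint_right.1 hdisj hx) (disjoint_right.1 hdisj hy)
  · rw [inter_eq_right] at hsub
    exact iff_of_true (hsub hx) (hsub hy)

theorem hasChainOfLen_two_iff : HasChainOfLen G 2 ↔ ∃ A ∈ G, ∃ B ∈ G, A ⊂ B := by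
  constructor
  · rintro ⟨C, hC, hCG⟩
    exact ⟨C 0, hCG 0, C 1, hCG 1, hC Fin.zero_lt_one⟩
  · rintro ⟨A, hA, B, hB, hAB⟩
    refine ⟨![A, B], Fin.strictMono_iff_lt_succ.2 ?_, Fin.forall_fin_two.2 ⟨hA, hB⟩⟩
    exact Fin.forall_fin_one.2 hAB

theorem isSatKSperner_one_of_forall_comparable (hGX : ∀ A ∈ G, A ⊆ X)
    (hanti : ∀ A ∈ G, ∀ B ∈ G, ¬ A ⊂ B) (hcomp : ∀ S ⊆ X, ∃ A ∈ G, A ⊆ S ∨ S ⊆ A) :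
    IsSatKSperner X G 1 := by
  refine ⟨hGX, fun h => ?_, fun S hSX hSG => hasChainOfLen_two_iff.2 ?_⟩
  · obtain ⟨A, hA, B, hB, hAB⟩ := hasChainOfLen_two_iff.1 h
    exact hanti A hA B hB hAB
  · obtain ⟨A, hA, hAS⟩ := hcomp S hSX
    have hne : A ≠ S := ne_of_mem_of_not_mem hA hSG
    rcases hAS with hAS | hSA
    · exact ⟨A, mem_insert_of_mem hA, S, mem_insert_self S G, hAS.ssubset_of_ne hne⟩
    · exact ⟨S, mem_insert_self S G, A, mem_insert_of_mem hA, hSA.ssubset_of_ne hne.symm⟩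

end

theorem canonical_decomposition_saturated {α : Type*} [DecidableEq α]
    (X : Finset α) (F : Finset (Finset α)) (k : ℕ)
    (hsat : IsSatKSperner X F k) (H : Finset α) (hH : IsHomogAtom X F H) :
    ∀ i < k, IsSatKSperner X (canonDecomp F i) 1 := by
  intro i hi
  obtain ⟨x, hx, y, hxy, hxyF⟩ := hH.exists_ne_forall_mem_iff
  apply isSatKSperner_one_of_forall_comparable
  · exact fun A hA => hsat.1 A (canonDecomp_subset F i hA)
  · exact fun A hA B hB => not_ssubset_of_mem_minimalsIn hA hB
  · exact fun S hSX => hsat.exists_mem_canonDecomp hxyF hxy hx hi hSX
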